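/- Under the standing assumptions of Section 4 of the paper, for any modules (V, v) and (W, w) over the semigroup A, there exists a morphism b⁰ : A⊗V⊗W → V⊗W, uniquely determined by b⁰∘(1⊗((v⊗w)∘(1⊗c⊗1))) = (v⊗w)∘(1⊗c⊗1)∘(d₁⊗1⊗1) : A⊗A⊗A⊗V⊗W → V⊗W, which is an associative A-action (b⁰∘(m⊗1⊗1) = b⁰∘(1⊗b⁰)) and satisfies: s∘b⁰ = b⁰ = b⁰∘(1⊗s), and (v⊗w)∘(1⊗c⊗1)∘(d₂⊗1⊗1) = (v⊗w)∘(1⊗c⊗1)∘(1⊗1⊗b⁰) : A⊗A⊗A⊗V⊗W → V⊗W. -/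

import Mathlib

open CategoryTheory Category MonoidalCategory Limits

universe v u

namespace WeakMultiplierBimonoid

variable {C : Type u} [Category.{v} C] [MonoidalCategory C] [BraidedCategory C]

def wl {A : C} (f : A ⊗ A ⟶ A ⊗ A) : A ⊗ (A ⊗ A) ⟶ A ⊗ (A ⊗ A) :=
  (α_ A A A).inv ≫ (f ▷ A) ≫ (α_ A A A).hom

def ml {A : C} (f : A ⊗ A ⟶ A) : A ⊗ (A ⊗ A) ⟶ A ⊗ A :=
  (α_ A A A).inv ≫ (f ▷ A)

def NdLeftOn {Z V W : C} (v : Z ⊗ V ⟶ W) (𝒴 : Set C) : Prop :=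
  ∀ (X : C), ∀ Y ∈ 𝒴, Function.Injective
    (fun g : X ⟶ V ⊗ Y => (Z ◁ g) ≫ (α_ Z V Y).inv ≫ (v ▷ Y))

def NdRightOn {Z V W : C} (v : Z ⊗ V ⟶ W) (𝒴 : Set C) : Prop :=
  NdLeftOn ((β_ V Z).hom ≫ v) 𝒴

/-- The "middle braiding" `1 ⊗ c ⊗ 1 : A⁴ ⟶ A⁴` on `(A ⊗ A) ⊗ (A ⊗ A)`. -/
def midSw (A : C) : (A ⊗ A) ⊗ (A ⊗ A) ⟶ (A ⊗ A) ⊗ (A ⊗ A) :=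
  (α_ A A (A ⊗ A)).hom ≫ (A ◁ (α_ A A A).inv) ≫ (A ◁ ((β_ A A).hom ▷ A)) ≫
    (A ◁ (α_ A A A).hom) ≫ (α_ A A (A ⊗ A)).inv

/-- A regular weak multiplier bimonoid on an object `A` of a braided monoidal category,
with multiplication non-degenerate with respect to the class `𝒴`
(Definition 2.9 of the paper). -/
structure RWMB (A : C) (𝒴 : Set C) where
  t₁ : A ⊗ A ⟶ A ⊗ A
  t₂ : A ⊗ A ⟶ A ⊗ A
  t₃ : A ⊗ A ⟶ A ⊗ A
  t₄ : A ⊗ A ⟶ A ⊗ A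
  e₁ : A ⊗ A ⟶ A ⊗ A
  e₂ : A ⊗ A ⟶ A ⊗ A
  j : A ⟶ 𝟙_ C
  /-- the induced multiplication -/
  m : A ⊗ A ⟶ A
  /-- counit condition (m1); in particular `m` is the induced multiplication -/
  hm₁ : m = t₁ ≫ (j ▷ A) ≫ (λ_ A).hom
  /-- counit condition (m2) -/
  hm₂ : m = t₂ ≫ (A ◁ j) ≫ (ρ_ A).hom
  /-- counit condition (m3) -/
  hm₃ : m = (β_ A A).hom ≫ t₃ ≫ (j ▷ A) ≫ (λ_ A).hom
  /-- counit condition (m4) -/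
  hm₄ : m = (β_ A A).hom ≫ t₄ ≫ (A ◁ j) ≫ (ρ_ A).hom
  /-- the class `𝒴` contains the monoidal unit -/
  memI : (𝟙_ C) ∈ 𝒴
  memA : A ∈ 𝒴
  memAA : (A ⊗ A) ∈ 𝒴
  /-- `m` is non-degenerate on the left with respect to `𝒴` -/
  ndl : NdLeftOn m 𝒴
  /-- `m` is non-degenerate on the right with respect to `𝒴` -/
  ndr : NdRightOn m 𝒴
  /-- relation (c12) -/
  hc12 : (A ◁ t₁) ≫ ml m = wl t₂ ≫ (A ◁ m)
  /-- relation (c13) -/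
  hc13 : wl t₁ ≫ (A ◁ (β_ A A).hom) ≫ (A ◁ m)
    = (A ◁ (β_ A A).hom) ≫ wl t₃ ≫ (A ◁ m)
  /-- relation (c14) -/
  hc14 : (A ◁ t₁) ≫ wl (β_ A A).hom ≫ ml m = wl t₄ ≫ (A ◁ m)
  /-- relation (c23) -/
  hc23 : wl t₂ ≫ (A ◁ (β_ A A).hom) ≫ (A ◁ m) = (A ◁ t₃) ≫ ml m
  /-- relation (c24) -/
  hc24 : (A ◁ t₂) ≫ wl (β_ A A).hom ≫ ml m = wl (β_ A A).hom ≫ (A ◁ t₄) ≫ ml m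
  /-- relation (c34) -/
  hc34 : (A ◁ t₃) ≫ wl (β_ A A).hom ≫ ml m = wl t₄ ≫ (A ◁ (β_ A A).hom) ≫ (A ◁ m)
  /-- interchange relation for `(t₂, t₁)` -/
  hi21 : (A ◁ t₁) ≫ wl t₂ = wl t₂ ≫ (A ◁ t₁)
  /-- interchange relation for `(t₄, t₁)` -/
  hi41 : (A ◁ t₁) ≫ wl t₄ = wl t₄ ≫ (A ◁ t₁)
  /-- interchange relation for `(t₂, t₃)` -/
  hi23 : (A ◁ t₃) ≫ wl t₂ = wl t₂ ≫ (A ◁ t₃)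
  /-- interchange relation for `(t₄, t₃)` -/
  hi43 : (A ◁ t₃) ≫ wl t₄ = wl t₄ ≫ (A ◁ t₃)
  /-- compatibility of the idempotents `e₁`, `e₂`:
  `(m ⊗ m) ∘ (1 ⊗ c ⊗ 1) ∘ (1 ⊗ 1 ⊗ e₁) = (m ⊗ m) ∘ (1 ⊗ c ⊗ 1) ∘ (e₂ ⊗ 1 ⊗ 1)` -/
  hecomp : ((A ⊗ A) ◁ e₁) ≫ midSw A ≫ (m ▷ (A ⊗ A)) ≫ (A ◁ m)
    = (e₂ ▷ (A ⊗ A)) ≫ midSw A ≫ (m ▷ (A ⊗ A)) ≫ (A ◁ m)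
  /-- Axiom I for the weakly counital fusion morphism `(t₁, e₁, j)` -/
  ax1 : (A ◁ t₁) ≫ wl (β_ A A).hom ≫ (A ◁ t₁) ≫ wl (β_ A A).inv ≫ wl t₁
    = wl t₁ ≫ (A ◁ t₁)
  /-- Axiom II -/
  ax2 : e₁ ≫ e₁ = e₁
  /-- Axiom III -/
  ax3 : t₁ ≫ e₁ = t₁
  /-- Axiom IV -/
  ax4 : (A ◁ e₁) ≫ (A ◁ (β_ A A).inv) ≫ wl t₁ ≫ (A ◁ (β_ A A).hom) ≫ ml m
    = (A ◁ (β_ A A).inv) ≫ wl t₁ ≫ (A ◁ (β_ A A).hom) ≫ ml m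
  /-- Axiom V -/
  ax5 : (A ◁ t₁) ≫ wl e₁ = wl e₁ ≫ (A ◁ t₁)
  /-- Axiom VI -/
  ax6 : wl t₁ ≫ (A ◁ e₁)
    = (A ◁ (β_ A A).inv) ≫ wl e₁ ≫ (A ◁ (β_ A A).hom) ≫ wl t₁
  /-- Axiom VII -/
  ax7 : wl t₁ ≫ (A ◁ ((j ▷ A) ≫ (λ_ A).hom)) ≫ m
    = (A ◁ (β_ A A).hom) ≫ (A ◁ e₁) ≫ (A ◁ ((A ◁ j) ≫ (ρ_ A).hom)) ≫ m
  /-- Axiom VIII -/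
  ax8 : wl t₁ ≫ (A ◁ (β_ A A).hom) ≫ ml m ≫ (j ▷ A) ≫ (λ_ A).hom
    = (A ◁ (β_ A A).hom) ≫ (A ◁ e₁) ≫ (A ◁ ((j ▷ A) ≫ (λ_ A).hom)) ≫ m

namespace RWMB

variable {A : C} {𝒴 : Set C} (S : RWMB A 𝒴)

/-- `⊓ᴸ₁ := (j ⊗ 1) ∘ e₁`. -/
def piL1 : A ⊗ A ⟶ A := S.e₁ ≫ (S.j ▷ A) ≫ (λ_ A).hom

/-- `⊓ᴸ₂ := (j ⊗ 1) ∘ t₄ ∘ c`. -/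
def piL2 : A ⊗ A ⟶ A := (β_ A A).hom ≫ S.t₄ ≫ (S.j ▷ A) ≫ (λ_ A).hom

/-- `⊓̄ᴿ₁ ∘ c⁻¹ = (1 ⊗ j) ∘ e₁`, the second leg of the coequalizer defining the base
object. -/
def piBarR1c : A ⊗ A ⟶ A := S.e₁ ≫ (A ◁ S.j) ≫ (ρ_ A).hom

end RWMB


/-- A module over the semigroup `(A, m)`, relative to the class `𝒴`: an object of `𝒴`
with an associative action which is a regular epimorphism and non-degenerate on the
left with respect to `𝒴`. -/
structure AModule (A : C) (m : A ⊗ A ⟶ A) (𝒴 : Set C) where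
  V : C
  mem : V ∈ 𝒴
  act : A ⊗ V ⟶ V
  assoc : (A ◁ act) ≫ act = (α_ A A V).inv ≫ (m ▷ V) ≫ act
  regEpi : Nonempty (RegularEpi act)
  nd : NdLeftOn act 𝒴

/-- The canonical idempotent
`s := (1 ⊗ ε ⊗ 1) ∘ (1 ⊗ μ ⊗ 1) ∘ (τ̄_V ⊗ τ_W) : V ⊗ W ⟶ V ⊗ W`. -/
def sIdem {L : C} (μ : L ⊗ L ⟶ L) (ε : L ⟶ 𝟙_ C) {V W : C}
    (τbV : V ⟶ V ⊗ L) (τW : W ⟶ L ⊗ W) : V ⊗ W ⟶ V ⊗ W :=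
  (τbV ▷ W) ≫ ((V ⊗ L) ◁ τW) ≫ (α_ V L (L ⊗ W)).hom ≫ (V ◁ (α_ L L W).inv) ≫
    (V ◁ (μ ▷ W)) ≫ (V ◁ (ε ▷ W)) ≫ (V ◁ (λ_ W).hom)

/-- `(v ⊗ w) ∘ (1 ⊗ c ⊗ 1) : (A ⊗ A) ⊗ (V ⊗ W) ⟶ V ⊗ W`, where the middle braiding
`c : A ⊗ V ⟶ V ⊗ A` interchanges the second `A` factor with `V`. -/
def actPair {A V W : C} (v : A ⊗ V ⟶ V) (w : A ⊗ W ⟶ W) :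
    (A ⊗ A) ⊗ (V ⊗ W) ⟶ V ⊗ W :=
  (α_ A A (V ⊗ W)).hom ≫ (A ◁ (α_ A V W).inv) ≫ (A ◁ ((β_ A V).hom ▷ W)) ≫
    (A ◁ (α_ V A W).hom) ≫ (α_ A V (A ⊗ W)).inv ≫ (v ▷ (A ⊗ W)) ≫ (V ◁ w)

/-- `d₁ := (m ⊗ 1) ∘ (1 ⊗ c) ∘ (t₁ ⊗ 1) ∘ (1 ⊗ c⁻¹) : A ⊗ A ⊗ A ⟶ A ⊗ A`. -/
def dOne {A : C} (m : A ⊗ A ⟶ A) (t₁ : A ⊗ A ⟶ A ⊗ A) : A ⊗ (A ⊗ A) ⟶ A ⊗ A :=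
  (A ◁ (β_ A A).inv) ≫ wl t₁ ≫ (A ◁ (β_ A A).hom) ≫ ml m

/-- `d₂ := (1 ⊗ m) ∘ (c ⊗ 1) ∘ (1 ⊗ t₂) ∘ (c⁻¹ ⊗ 1) : A ⊗ A ⊗ A ⟶ A ⊗ A`. -/
def dTwo {A : C} (m : A ⊗ A ⟶ A) (t₂ : A ⊗ A ⟶ A ⊗ A) : A ⊗ (A ⊗ A) ⟶ A ⊗ A :=
  wl (β_ A A).inv ≫ (A ◁ t₂) ≫ wl (β_ A A).hom ≫ (A ◁ m)

/-!
The object `A ⊗ A` is a semigroup under `actPair m m`, and `actPair v w` makes `V ⊗ W` a faithful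
module over it whose action is a regular epimorphism. The pair `(d₁, d₂)` is a multiplier of this
semigroup: `d₂` acts on the left factor of a product as `d₁` acts on the right one. A multiplier
acts on every such module, just as a multiplier of a ring acts on a faithful module `V` with
`RV = V`; this is `b⁰`, with its uniqueness and its relation to `d₂`, and it is associative
because `d₁` is.

For the idempotents, the relation between `e₁` and `e₂` says that `(e₁, e₂)` is a multiplier as
well, so `e₁` commutes with right-linear maps such as `1 ⊗ m` and `(m ⊗ 1) ∘ (1 ⊗ c)`.
Non-degeneracy of `m` on the right then allows `e₁` to be exchanged with `t₄`, which identifies the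
canonical idempotent of `A ⊗ A` with `e₁`. Since the coactions are compatible with the actions,
`actPair v w` intertwines `e₁` with `s`, and the two absorption laws follow from `e₁ ∘ d₁ = d₁` and
`d₁ ∘ (1 ⊗ e₁) = d₁`.
-/

section Words

variable {𝒞 : Type u} [Category.{v} 𝒞] [MonoidalCategory 𝒞]

/-- `f ⊗ 1_Y` on right-nested words. A family of such maps, indexed by the numbers of factors
which `f` consumes and produces, lets one compute with right-nested words as if the category
were strict. -/
def head₂₂ {A B D E : 𝒞} (f : A ⊗ B ⟶ D ⊗ E) (Y : 𝒞) : A ⊗ (B ⊗ Y) ⟶ D ⊗ (E ⊗ Y) :=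
  (α_ A B Y).inv ≫ f ▷ Y ≫ (α_ D E Y).hom

/-- `f ⊗ 1_Y` on right-nested words, for `f` from two factors to one. -/
def head₂₁ {A B D : 𝒞} (f : A ⊗ B ⟶ D) (Y : 𝒞) : A ⊗ (B ⊗ Y) ⟶ D ⊗ Y :=
  (α_ A B Y).inv ≫ f ▷ Y

/-- `f ⊗ 1_Y` on right-nested words, for `f` from one factor to two. -/
def head₁₂ {A D E : 𝒞} (f : A ⟶ D ⊗ E) (Y : 𝒞) : A ⊗ Y ⟶ D ⊗ (E ⊗ Y) :=
  f ▷ Y ≫ (α_ D E Y).hom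

/-- `f ⊗ 1_Y` on right-nested words, for `f` from one factor to the empty word. -/
def head₁₀ {A : 𝒞} (f : A ⟶ 𝟙_ 𝒞) (Y : 𝒞) : A ⊗ Y ⟶ Y :=
  f ▷ Y ≫ (λ_ Y).hom

-- As simp lemmas the exchange laws move maps acting further to the right to the front, which
-- settles the interchange bookkeeping between the steps of the calculations below.
@[simp]
theorem head₂₂_exchange {A B D E Y Y' : 𝒞} (f : A ⊗ B ⟶ D ⊗ E) (g : Y ⟶ Y') :
    head₂₂ f Y ≫ D ◁ E ◁ g = A ◁ B ◁ g ≫ head₂₂ f Y' := by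
  simp only [head₂₂, assoc, associator_inv_naturality_right_assoc, whisker_exchange_assoc,
    associator_naturality_right]

@[simp]
theorem head₂₂_exchange_assoc {A B D E Y Y' Z : 𝒞} (f : A ⊗ B ⟶ D ⊗ E) (g : Y ⟶ Y')
    (h : D ⊗ (E ⊗ Y') ⟶ Z) :
    head₂₂ f Y ≫ D ◁ E ◁ g ≫ h = A ◁ B ◁ g ≫ head₂₂ f Y' ≫ h := by
  rw [← assoc, head₂₂_exchange, assoc]

@[simp]
theorem head₂₂_exchange_comp {A B D E Y Y' Z : 𝒞} (f : A ⊗ B ⟶ D ⊗ E) (g : Y ⟶ Y')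
    (h : E ⊗ Y' ⟶ Z) :
    head₂₂ f Y ≫ D ◁ (E ◁ g ≫ h) = A ◁ B ◁ g ≫ head₂₂ f Y' ≫ D ◁ h := by
  rw [whiskerLeft_comp, head₂₂_exchange_assoc]

@[simp]
theorem head₂₂_exchange_comp_assoc {A B D E Y Y' Z Z' : 𝒞} (f : A ⊗ B ⟶ D ⊗ E) (g : Y ⟶ Y')
    (h : E ⊗ Y' ⟶ Z) (k : D ⊗ Z ⟶ Z') :
    head₂₂ f Y ≫ D ◁ (E ◁ g ≫ h) ≫ k = A ◁ B ◁ g ≫ head₂₂ f Y' ≫ D ◁ h ≫ k := by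
  rw [whiskerLeft_comp, assoc, head₂₂_exchange_assoc]

@[simp]
theorem head₂₁_exchange {A B D Y Y' : 𝒞} (f : A ⊗ B ⟶ D) (g : Y ⟶ Y') :
    head₂₁ f Y ≫ D ◁ g = A ◁ B ◁ g ≫ head₂₁ f Y' := by
  simp only [head₂₁, assoc, associator_inv_naturality_right_assoc, whisker_exchange]

@[simp]
theorem head₂₁_exchange_assoc {A B D Y Y' Z : 𝒞} (f : A ⊗ B ⟶ D) (g : Y ⟶ Y')
    (h : D ⊗ Y' ⟶ Z) :
    head₂₁ f Y ≫ D ◁ g ≫ h = A ◁ B ◁ g ≫ head₂₁ f Y' ≫ h := by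
  rw [← assoc, head₂₁_exchange, assoc]

@[simp]
theorem head₁₂_exchange_assoc {A D E Y Y' Z : 𝒞} (f : A ⟶ D ⊗ E) (g : Y ⟶ Y')
    (h : D ⊗ (E ⊗ Y') ⟶ Z) :
    head₁₂ f Y ≫ D ◁ E ◁ g ≫ h = A ◁ g ≫ head₁₂ f Y' ≫ h := by
  simp [head₁₂, whisker_exchange_assoc]

@[simp]
theorem head₁₂_exchange_comp_assoc {A D E Y Y' Z Z' : 𝒞} (f : A ⟶ D ⊗ E) (g : Y ⟶ Y')
    (h : E ⊗ Y' ⟶ Z) (k : D ⊗ Z ⟶ Z') :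
    head₁₂ f Y ≫ D ◁ (E ◁ g ≫ h) ≫ k = A ◁ g ≫ head₁₂ f Y' ≫ D ◁ h ≫ k := by
  rw [whiskerLeft_comp, assoc, head₁₂_exchange_assoc]

@[simp]
theorem head₁₀_exchange {A Y Y' : 𝒞} (f : A ⟶ 𝟙_ 𝒞) (g : Y ⟶ Y') :
    head₁₀ f Y ≫ g = A ◁ g ≫ head₁₀ f Y' := by
  simp [head₁₀, whisker_exchange_assoc]

@[simp]
theorem head₂₂_hom_inv {A B D E : 𝒞} (f : A ⊗ B ≅ D ⊗ E) (Y : 𝒞) :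
    head₂₂ f.hom Y ≫ head₂₂ f.inv Y = 𝟙 _ := by
  simp [head₂₂, ← comp_whiskerRight_assoc]

@[simp]
theorem head₂₂_hom_inv_assoc {A B D E Y Z : 𝒞} (f : A ⊗ B ≅ D ⊗ E) (h : A ⊗ (B ⊗ Y) ⟶ Z) :
    head₂₂ f.hom Y ≫ head₂₂ f.inv Y ≫ h = h := by
  rw [← assoc, head₂₂_hom_inv, id_comp]

@[simp]
theorem head₂₂_inv_hom_assoc {A B D E Y Z : 𝒞} (f : A ⊗ B ≅ D ⊗ E) (h : D ⊗ (E ⊗ Y) ⟶ Z) :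
    head₂₂ f.inv Y ≫ head₂₂ f.hom Y ≫ h = h :=
  head₂₂_hom_inv_assoc f.symm h

theorem head₂₁_comp_head₂₁_of_assoc {A V : 𝒞} {m : A ⊗ A ⟶ A} {v : A ⊗ V ⟶ V}
    (hv : A ◁ v ≫ v = (α_ A A V).inv ≫ m ▷ V ≫ v) (Y : 𝒞) :
    head₂₁ m (V ⊗ Y) ≫ head₂₁ v Y = A ◁ head₂₁ v Y ≫ head₂₁ v Y := by
  have h := congrArg (fun k => A ◁ (α_ A V Y).inv ≫ (α_ A (A ⊗ V) Y).inv ≫ k ▷ Y) hv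
  simp only [head₂₁]
  simpa using h.symm

theorem wl_eq_head₂₂ {A : 𝒞} (f : A ⊗ A ⟶ A ⊗ A) : wl f = head₂₂ f A :=
  rfl

theorem ml_eq_head₂₁ {A : 𝒞} (f : A ⊗ A ⟶ A) : ml f = head₂₁ f A :=
  rfl

end Words

section Braiding

theorem head₂₁_comp_braiding {A B D : C} (f : A ⊗ B ⟶ D) (E : C) :
    head₂₁ f E ≫ (β_ D E).hom =
      A ◁ (β_ B E).hom ≫ head₂₂ (β_ A E).hom B ≫ E ◁ f := by
  rw [head₂₁, assoc, BraidedCategory.braiding_naturality_left,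
    BraidedCategory.braiding_tensor_left_hom]
  simp [head₂₂]

theorem whiskerLeft_comp_braiding {A B D : C} (E : C) (f : A ⊗ B ⟶ D) :
    E ◁ f ≫ (β_ E D).hom =
      head₂₂ (β_ E A).hom B ≫ A ◁ (β_ E B).hom ≫ head₂₁ f E := by
  rw [BraidedCategory.braiding_naturality_right, BraidedCategory.braiding_tensor_right_hom]
  simp [head₂₂, head₂₁]

theorem head₂₁_comp_head₂₂_braiding {A B D : C} (f : A ⊗ B ⟶ D) (E Y : C) :
    head₂₁ f (E ⊗ Y) ≫ head₂₂ (β_ D E).hom Y =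
      A ◁ head₂₂ (β_ B E).hom Y ≫ head₂₂ (β_ A E).hom (B ⊗ Y) ≫ E ◁ head₂₁ f Y := by
  have h := congrArg (fun k => A ◁ (α_ B E Y).inv ≫ (α_ A (B ⊗ E) Y).inv ≫ k ▷ Y ≫
    (α_ E D Y).hom) (head₂₁_comp_braiding f E)
  refine Eq.trans ?_ (h.trans ?_)
  · simp only [head₂₁, head₂₂]
    monoidal
  · simp only [head₂₁, head₂₂]
    monoidal

theorem whiskerLeft_head₂₁_comp_head₂₂_braiding {A B D : C} (f : A ⊗ B ⟶ D) (E Y : C) :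
    E ◁ head₂₁ f Y ≫ head₂₂ (β_ E D).hom Y =
      head₂₂ (β_ E A).hom (B ⊗ Y) ≫ A ◁ head₂₂ (β_ E B).hom Y ≫ head₂₁ f (E ⊗ Y) := by
  have h := congrArg (fun k => E ◁ (α_ A B Y).inv ≫ (α_ E (A ⊗ B) Y).inv ≫ k ▷ Y ≫
    (α_ D E Y).hom) (whiskerLeft_comp_braiding E f)
  refine Eq.trans ?_ (h.trans ?_)
  · simp only [head₂₂, head₂₁]
    monoidal
  · simp only [head₂₂, head₂₁]
    monoidal

theorem head₂₂_braiding_inv_comp_whiskerLeft {A B D : C} (f : A ⊗ B ⟶ D) (E : C) :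
    head₂₂ (β_ E A).inv B ≫ E ◁ f =
      A ◁ (β_ E B).hom ≫ head₂₁ f E ≫ (β_ E D).inv := by
  rw [← cancel_mono (β_ E D).hom, assoc, whiskerLeft_comp_braiding]
  simp

theorem head₂₂_braiding_conj {A B D E : C} (f : A ⊗ B ⟶ D ⊗ E) (F : C) :
    head₂₂ (β_ A F).hom B ≫ F ◁ f ≫ head₂₂ (β_ D F).inv E =
      A ◁ (β_ B F).inv ≫ head₂₂ f F ≫ D ◁ (β_ E F).hom := by
  have h := BraidedCategory.braiding_naturality_left f F
  rw [BraidedCategory.braiding_tensor_left_hom, BraidedCategory.braiding_tensor_left_hom] at h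
  have h' := congrArg (fun k => A ◁ (β_ B F).inv ≫ (α_ A B F).inv ≫ k ≫ (α_ F D E).inv ≫
    (β_ D F).inv ▷ E ≫ (α_ D F E).hom) h
  simpa [head₂₂] using h'.symm

theorem head₂₂_braiding_comp_whiskerLeft_head₁₂ {A D E : C} (f : A ⟶ D ⊗ E) (F Y : C) :
    head₂₂ (β_ A F).hom Y ≫ F ◁ head₁₂ f Y =
      head₁₂ f (F ⊗ Y) ≫ D ◁ head₂₂ (β_ E F).hom Y ≫ head₂₂ (β_ D F).hom (E ⊗ Y) := by
  have h := BraidedCategory.braiding_naturality_left f F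
  rw [BraidedCategory.braiding_tensor_left_hom] at h
  have h' := congrArg (fun k => (α_ A F Y).inv ≫ k ▷ Y ≫ (α_ F (D ⊗ E) Y).hom ≫
    F ◁ (α_ D E Y).hom) h
  refine Eq.trans ?_ (h'.symm.trans ?_)
  · simp only [head₂₂, head₁₂]
    monoidal
  · simp only [head₂₂, head₁₂]
    monoidal

theorem head₂₂_braiding_comp_whiskerLeft_head₁₀ {A : C} (f : A ⟶ 𝟙_ C) (F Y : C) :
    head₂₂ (β_ A F).hom Y ≫ F ◁ head₁₀ f Y = head₁₀ f (F ⊗ Y) := by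
  have h := congrArg (fun k => (α_ A F Y).inv ≫ k ▷ Y ≫ (α_ F (𝟙_ C) Y).hom ≫ F ◁ (λ_ Y).hom)
    (BraidedCategory.braiding_naturality_left f F)
  rw [braiding_tensorUnit_left] at h
  refine Eq.trans ?_ (h.symm.trans ?_)
  · simp only [head₂₂, head₁₀]
    monoidal
  · simp only [head₁₀]
    monoidal

theorem dOne_eq_head {A : C} (m : A ⊗ A ⟶ A) (t₁ : A ⊗ A ⟶ A ⊗ A) :
    dOne m t₁ =
      A ◁ (β_ A A).inv ≫ head₂₂ t₁ A ≫ A ◁ (β_ A A).hom ≫ head₂₁ m A :=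
  rfl

theorem dTwo_eq_head {A : C} (m : A ⊗ A ⟶ A) (t₂ : A ⊗ A ⟶ A ⊗ A) :
    dTwo m t₂ =
      head₂₂ (β_ A A).inv A ≫ A ◁ t₂ ≫ head₂₂ (β_ A A).hom A ≫ A ◁ m :=
  rfl

end Braiding

section Multipliers

variable {𝒞 : Type u} [Category.{v} 𝒞] [MonoidalCategory 𝒞]

/-- Non-degeneracy of an action `ρ : B ⊗ Z ⟶ Z` on the left, tested on generalized elements
of `Z`; this is `NdLeftOn` for the class consisting of the monoidal unit. -/
def IsFaithfulAction {B Z : 𝒞} (ρ : B ⊗ Z ⟶ Z) : Prop :=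
  ∀ ⦃X : 𝒞⦄ ⦃f g : X ⟶ Z⦄, B ◁ f ≫ ρ = B ◁ g ≫ ρ → f = g

variable {A B Z : 𝒞} {m : A ⊗ A ⟶ A} {mB : B ⊗ B ⟶ B} {l : A ⊗ B ⟶ B} {r : B ⊗ A ⟶ B}
  {ρ : B ⊗ Z ⟶ Z} {b : A ⊗ Z ⟶ Z}

theorem whiskerLeft_whiskerRight_comp_action
    (hρ : B ◁ ρ ≫ ρ = (α_ B B Z).inv ≫ mB ▷ Z ≫ ρ)
    (hlr : r ▷ B ≫ mB = (α_ B A B).hom ≫ B ◁ l ≫ mB) :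
    B ◁ ((α_ A B Z).inv ≫ l ▷ Z ≫ ρ) ≫ ρ =
      B ◁ A ◁ ρ ≫ (α_ B A Z).inv ≫ r ▷ Z ≫ ρ := by
  calc B ◁ ((α_ A B Z).inv ≫ l ▷ Z ≫ ρ) ≫ ρ
      = B ◁ (α_ A B Z).inv ≫ B ◁ l ▷ Z ≫ (α_ B B Z).inv ≫ mB ▷ Z ≫ ρ := by
        simp only [whiskerLeft_comp, assoc, hρ]
    _ = B ◁ (α_ A B Z).inv ≫ (α_ B (A ⊗ B) Z).inv ≫ (B ◁ l ≫ mB) ▷ Z ≫ ρ := by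
        simp
    _ = (α_ B A (B ⊗ Z)).inv ≫ (α_ (B ⊗ A) B Z).inv ≫ (r ▷ B ≫ mB) ▷ Z ≫ ρ := by
        rw [hlr]
        simp
    _ = (α_ B A (B ⊗ Z)).inv ≫ r ▷ (B ⊗ Z) ≫ B ◁ ρ ≫ ρ := by
        simp [hρ]
    _ = B ◁ A ◁ ρ ≫ (α_ B A Z).inv ≫ r ▷ Z ≫ ρ := by
        rw [← whisker_exchange_assoc, associator_inv_naturality_right_assoc]

theorem exists_whiskerLeft_action_comp_eq (hfaith : IsFaithfulAction ρ)
    (hreg : Nonempty (RegularEpi (A ◁ ρ)))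
    (hρ : B ◁ ρ ≫ ρ = (α_ B B Z).inv ≫ mB ▷ Z ≫ ρ)
    (hlr : r ▷ B ≫ mB = (α_ B A B).hom ≫ B ◁ l ≫ mB) :
    ∃ b : A ⊗ Z ⟶ Z, A ◁ ρ ≫ b = (α_ A B Z).inv ≫ l ▷ Z ≫ ρ := by
  obtain ⟨hreg⟩ := hreg
  have coequalizes :
      hreg.left ≫ (α_ A B Z).inv ≫ l ▷ Z ≫ ρ = hreg.right ≫ (α_ A B Z).inv ≫ l ▷ Z ≫ ρ := by
    apply hfaith
    rw [whiskerLeft_comp, assoc, whiskerLeft_whiskerRight_comp_action hρ hlr, ← assoc,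
      ← whiskerLeft_comp, hreg.w, whiskerLeft_comp, assoc,
      ← whiskerLeft_whiskerRight_comp_action hρ hlr, ← assoc, ← whiskerLeft_comp]
  exact ⟨_, (RegularEpi.desc' hreg _ coequalizes).2⟩

theorem whiskerRight_comp_action_eq [Epi (B ◁ A ◁ ρ)]
    (hρ : B ◁ ρ ≫ ρ = (α_ B B Z).inv ≫ mB ▷ Z ≫ ρ)
    (hlr : r ▷ B ≫ mB = (α_ B A B).hom ≫ B ◁ l ≫ mB)
    (hb : A ◁ ρ ≫ b = (α_ A B Z).inv ≫ l ▷ Z ≫ ρ) :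
    (α_ B A Z).inv ≫ r ▷ Z ≫ ρ = B ◁ b ≫ ρ := by
  rw [← cancel_epi (B ◁ A ◁ ρ), ← whiskerLeft_whiskerRight_comp_action hρ hlr, ← hb,
    whiskerLeft_comp, assoc]

theorem action_assoc_of_whiskerLeft_action_comp [Epi (A ◁ A ◁ ρ)]
    (hl : A ◁ l ≫ l = (α_ A A B).inv ≫ m ▷ B ≫ l)
    (hb : A ◁ ρ ≫ b = (α_ A B Z).inv ≫ l ▷ Z ≫ ρ) :
    A ◁ b ≫ b = (α_ A A Z).inv ≫ m ▷ Z ≫ b := by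
  rw [← cancel_epi (A ◁ A ◁ ρ)]
  calc A ◁ A ◁ ρ ≫ A ◁ b ≫ b
      = A ◁ (A ◁ ρ ≫ b) ≫ b := by rw [whiskerLeft_comp, assoc]
    _ = A ◁ (α_ A B Z).inv ≫ A ◁ l ▷ Z ≫ A ◁ ρ ≫ b := by
        simp only [hb, whiskerLeft_comp, assoc]
    _ = A ◁ (α_ A B Z).inv ≫ (α_ A (A ⊗ B) Z).inv ≫ (A ◁ l ≫ l) ▷ Z ≫ ρ := by
        rw [hb]
        simp
    _ = (α_ A A (B ⊗ Z)).inv ≫ m ▷ (B ⊗ Z) ≫ (α_ A B Z).inv ≫ l ▷ Z ≫ ρ := by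
        rw [hl]
        simp
    _ = A ◁ A ◁ ρ ≫ (α_ A A Z).inv ≫ m ▷ Z ≫ b := by
        rw [← hb, ← whisker_exchange_assoc, associator_inv_naturality_right_assoc]

theorem action_comp_eq_self [Epi (A ◁ ρ)] {e : B ⟶ B} {s : Z ⟶ Z} (hs : ρ ≫ s = e ▷ Z ≫ ρ)
    (hle : l ≫ e = l) (hb : A ◁ ρ ≫ b = (α_ A B Z).inv ≫ l ▷ Z ≫ ρ) :
    b ≫ s = b := by
  rw [← cancel_epi (A ◁ ρ), ← assoc, hb, assoc, assoc, hs, ← comp_whiskerRight_assoc, hle]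

theorem whiskerLeft_comp_action_eq_self [Epi (A ◁ ρ)] {e : B ⟶ B} {s : Z ⟶ Z}
    (hs : ρ ≫ s = e ▷ Z ≫ ρ) (hel : A ◁ e ≫ l = l)
    (hb : A ◁ ρ ≫ b = (α_ A B Z).inv ≫ l ▷ Z ≫ ρ) :
    A ◁ s ≫ b = b := by
  rw [← cancel_epi (A ◁ ρ), ← whiskerLeft_comp_assoc, hs, whiskerLeft_comp, assoc, hb,
    associator_inv_naturality_middle_assoc, ← comp_whiskerRight_assoc, hel]

theorem whiskerRight_comp_eq_comp_of_rightLinear (hfaith : IsFaithfulAction mB) {e₁ e₂ : B ⟶ B}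
    (he : B ◁ e₁ ≫ mB = e₂ ▷ B ≫ mB) {D : 𝒞} {R : B ⊗ D ⟶ B}
    (hR : B ◁ R ≫ mB = (α_ B B D).inv ≫ mB ▷ D ≫ R) :
    e₁ ▷ D ≫ R = R ≫ e₁ := by
  apply hfaith
  calc B ◁ (e₁ ▷ D ≫ R) ≫ mB
      = (α_ B B D).inv ≫ (B ◁ e₁ ≫ mB) ▷ D ≫ R := by simp [hR]
    _ = e₂ ▷ (B ⊗ D) ≫ B ◁ R ≫ mB := by simp [he, hR]
    _ = B ◁ R ≫ B ◁ e₁ ≫ mB := by rw [he, whisker_exchange_assoc]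
    _ = B ◁ (R ≫ e₁) ≫ mB := by simp

end Multipliers

section RegularEpi

variable {𝒞 : Type u} [Category.{v} 𝒞]

theorem epi_of_nonempty_regularEpi {P Q : 𝒞} {f : P ⟶ Q} (hf : Nonempty (RegularEpi f)) :
    Epi f :=
  hf.elim fun h => h.epi

theorem nonempty_regularEpi_map {𝒟 : Type*} [Category* 𝒟] (F : 𝒞 ⥤ 𝒟)
    [PreservesColimitsOfShape WalkingParallelPair F] {P Q : 𝒞} {f : P ⟶ Q}
    (hf : Nonempty (RegularEpi f)) : Nonempty (RegularEpi (F.map f)) :=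
  hf.elim fun h => ⟨⟨_, _, _, _, isColimitCoforkMapOfIsColimit F _ h.isColimit⟩⟩

end RegularEpi

section Nondegenerate

variable {𝒴 : Set C}

theorem NdLeftOn.eq_of_head₂₂_braiding {Z V W Y : C} {f : Z ⊗ V ⟶ W} (hf : NdLeftOn f 𝒴)
    (hY : Y ∈ 𝒴) {X : C} {g g' : X ⟶ Y ⊗ V}
    (h : Z ◁ g ≫ head₂₂ (β_ Z Y).hom V ≫ Y ◁ f = Z ◁ g' ≫ head₂₂ (β_ Z Y).hom V ≫ Y ◁ f) :
    g = g' := by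
  have swap (k : X ⟶ Y ⊗ V) : Z ◁ (k ≫ (β_ V Y).inv) ≫ head₂₁ f Y =
      (Z ◁ k ≫ head₂₂ (β_ Z Y).hom V ≫ Y ◁ f) ≫ (β_ W Y).inv := by
    rw [Iso.eq_comp_inv, assoc, head₂₁_comp_braiding]
    simp
  rw [← cancel_mono (β_ V Y).inv]
  exact hf X Y hY (by simpa only [head₂₁] using (swap g).trans (h ▸ (swap g').symm))

theorem NdRightOn.eq_of_whiskerRight {A D Q : C} {f : A ⊗ A ⟶ D} (hf : NdRightOn f 𝒴)
    (hQ : Q ∈ 𝒴) {X : C} {g g' : X ⟶ Q ⊗ A}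
    (h : g ▷ A ≫ (α_ Q A A).hom ≫ Q ◁ f = g' ▷ A ≫ (α_ Q A A).hom ≫ Q ◁ f) : g = g' := by
  have swap (k : X ⟶ Q ⊗ A) :
      A ◁ k ≫ head₂₂ (β_ A Q).hom A ≫ Q ◁ ((β_ A A).hom ≫ f) =
        (β_ A X).hom ≫ k ▷ A ≫ (α_ Q A A).hom ≫ Q ◁ f := by
    rw [← BraidedCategory.braiding_naturality_right_assoc,
      BraidedCategory.braiding_tensor_right_hom]
    simp [head₂₂]
  apply NdLeftOn.eq_of_head₂₂_braiding hf hQ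
  rw [swap, swap, h]

theorem NdRightOn.eq_of_whiskerRight_comp_braiding {A D P Q : C} {f : A ⊗ A ⟶ D}
    (hf : NdRightOn f 𝒴) (hPQ : P ⊗ Q ∈ 𝒴) {X : C} {g g' : X ⟶ P ⊗ (A ⊗ Q)}
    (h : g ▷ A ≫ (α_ P (A ⊗ Q) A).hom ≫
        P ◁ ((α_ A Q A).hom ≫ A ◁ (β_ Q A).hom ≫ (α_ A A Q).inv ≫ f ▷ Q) =
      g' ▷ A ≫ (α_ P (A ⊗ Q) A).hom ≫
        P ◁ ((α_ A Q A).hom ≫ A ◁ (β_ Q A).hom ≫ (α_ A A Q).inv ≫ f ▷ Q)) : g = g' := by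
  have swap (k : X ⟶ P ⊗ (A ⊗ Q)) :
      (k ≫ P ◁ (β_ Q A).inv ≫ (α_ P Q A).inv) ▷ A ≫ (α_ (P ⊗ Q) A A).hom ≫ (P ⊗ Q) ◁ f =
        (k ▷ A ≫ (α_ P (A ⊗ Q) A).hom ≫
          P ◁ ((α_ A Q A).hom ≫ A ◁ (β_ Q A).hom ≫ (α_ A A Q).inv ≫ f ▷ Q)) ≫
          P ◁ (β_ Q D).inv ≫ (α_ P Q D).inv := by
    have move := congrArg (fun i => k ▷ A ≫ (α_ P (A ⊗ Q) A).hom ≫ P ◁ ((α_ A Q A).hom ≫ i) ≫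
      (α_ P Q D).inv) (head₂₂_braiding_inv_comp_whiskerLeft f Q)
    refine Eq.trans ?_ (move.trans ?_)
    · simp only [head₂₂]
      monoidal
    · simp only [head₂₁, whiskerLeft_comp, assoc]
  rw [← cancel_mono (P ◁ (β_ Q A).inv ≫ (α_ P Q A).inv)]
  apply hf.eq_of_whiskerRight hPQ
  rw [swap, swap, h]

end Nondegenerate

section ActPair

variable {A V W : C} {m : A ⊗ A ⟶ A} {v : A ⊗ V ⟶ V} {w : A ⊗ W ⟶ W}

theorem actPair_eq_head (v : A ⊗ V ⟶ V) (w : A ⊗ W ⟶ W) :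
    actPair v w =
      (α_ A A (V ⊗ W)).hom ≫ A ◁ head₂₂ (β_ A V).hom W ≫ head₂₁ v (A ⊗ W) ≫ V ◁ w := by
  simp [actPair, head₂₂, head₂₁]

theorem whiskerRight_actPair_eq_head (v : A ⊗ V ⟶ V) (w : A ⊗ W ⟶ W) (Y : C) :
    actPair v w ▷ Y =
      (α_ (A ⊗ A) (V ⊗ W) Y).hom ≫ (α_ A A ((V ⊗ W) ⊗ Y)).hom ≫ A ◁ A ◁ (α_ V W Y).hom ≫
        A ◁ head₂₂ (β_ A V).hom (W ⊗ Y) ≫ head₂₁ v (A ⊗ (W ⊗ Y)) ≫ V ◁ head₂₁ w Y ≫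
          (α_ V W Y).inv := by
  simp only [actPair, head₂₂, head₂₁]
  monoidal

theorem isFaithfulAction_actPair {𝒴 : Set C} (hv : NdLeftOn v 𝒴) (hw : NdLeftOn w 𝒴)
    (hV : V ∈ 𝒴) (hW : W ∈ 𝒴) : IsFaithfulAction (actPair v w) := by
  intro X f g h
  have factor (k : X ⟶ V ⊗ W) : (A ⊗ A) ◁ k ≫ actPair v w =
      (α_ A A X).hom ≫ A ◁ (A ◁ k ≫ head₂₂ (β_ A V).hom W ≫ V ◁ w) ≫ head₂₁ v W := by
    simp [actPair_eq_head]
  rw [factor, factor, cancel_epi] at h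
  exact hw.eq_of_head₂₂_braiding hV (hv _ W hW h)

theorem nonempty_regularEpi_actPair
    (presL : ∀ X : C, PreservesColimitsOfShape WalkingParallelPair (tensorLeft X))
    (presR : ∀ X : C, PreservesColimitsOfShape WalkingParallelPair (tensorRight X))
    (regcomp : ∀ {X Y Z : C} (f : X ⟶ Y) (g : Y ⟶ Z),
      Nonempty (RegularEpi f) → Nonempty (RegularEpi g) → Nonempty (RegularEpi (f ≫ g)))
    (hv : Nonempty (RegularEpi v)) (hw : Nonempty (RegularEpi w)) :
    Nonempty (RegularEpi (actPair v w)) := by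
  let middleSwap : (A ⊗ A) ⊗ (V ⊗ W) ≅ (A ⊗ V) ⊗ (A ⊗ W) :=
    α_ A A (V ⊗ W) ≪≫ whiskerLeftIso A
      ((α_ A V W).symm ≪≫ whiskerRightIso (β_ A V) W ≪≫ α_ V A W) ≪≫ (α_ A V (A ⊗ W)).symm
  have factor : actPair v w = middleSwap.hom ≫ v ▷ (A ⊗ W) ≫ V ◁ w := by
    simp [actPair, middleSwap]
  rw [factor]
  exact regcomp _ _ ⟨RegularEpi.ofIso middleSwap⟩
    (regcomp _ _ (nonempty_regularEpi_map (tensorRight (A ⊗ W)) hv)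
      (nonempty_regularEpi_map (tensorLeft V) hw))

theorem actPair_assoc_head (hv : A ◁ v ≫ v = (α_ A A V).inv ≫ m ▷ V ≫ v)
    (hw : A ◁ w ≫ w = (α_ A A W).inv ≫ m ▷ W ≫ w) :
    A ◁ A ◁ (A ◁ head₂₂ (β_ A V).hom W ≫ head₂₁ v (A ⊗ W) ≫ V ◁ w) ≫
        A ◁ head₂₂ (β_ A V).hom W ≫ head₂₁ v (A ⊗ W) ≫ V ◁ w =
      A ◁ head₂₂ (β_ A A).hom (A ⊗ (V ⊗ W)) ≫ head₂₁ m (A ⊗ (A ⊗ (V ⊗ W))) ≫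
        A ◁ head₂₁ m (V ⊗ W) ≫ A ◁ head₂₂ (β_ A V).hom W ≫ head₂₁ v (A ⊗ W) ≫ V ◁ w := by
  have hw' : A ◁ w ≫ w = head₂₁ m W ≫ w := by rw [hw, head₂₁, assoc]
  symm
  calc
    _ = A ◁ head₂₂ (β_ A A).hom _ ≫ head₂₁ m _ ≫
          A ◁ (head₂₁ m (V ⊗ W) ≫ head₂₂ (β_ A V).hom W) ≫ head₂₁ v (A ⊗ W) ≫ V ◁ w := by
        simp [-whiskerLeft_comp, ← whiskerLeft_comp_assoc]
    _ = A ◁ (head₂₂ (β_ A A).hom _ ≫ A ◁ A ◁ head₂₂ (β_ A V).hom W ≫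
            A ◁ head₂₂ (β_ A V).hom _) ≫
          (head₂₁ m _ ≫ head₂₁ v _) ≫ V ◁ (head₂₁ m W ≫ w) := by
        rw [head₂₁_comp_head₂₂_braiding]
        simp [← whiskerLeft_comp, ← whiskerLeft_comp_assoc]
    _ = A ◁ A ◁ A ◁ head₂₂ (β_ A V).hom W ≫
          A ◁ (head₂₂ (β_ A A).hom _ ≫ A ◁ head₂₂ (β_ A V).hom _ ≫ head₂₁ v _) ≫
            head₂₁ v _ ≫ V ◁ (A ◁ w ≫ w) := by
        rw [head₂₁_comp_head₂₁_of_assoc hv, hw']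
        simp [-whiskerLeft_comp, ← whiskerLeft_comp_assoc]
    _ = _ := by
        rw [← whiskerLeft_head₂₁_comp_head₂₂_braiding]
        simp [-whiskerLeft_comp, ← whiskerLeft_comp_assoc]

theorem actPair_assoc (hv : A ◁ v ≫ v = (α_ A A V).inv ≫ m ▷ V ≫ v)
    (hw : A ◁ w ≫ w = (α_ A A W).inv ≫ m ▷ W ≫ w) :
    (A ⊗ A) ◁ actPair v w ≫ actPair v w =
      (α_ (A ⊗ A) (A ⊗ A) (V ⊗ W)).inv ≫ actPair m m ▷ (V ⊗ W) ≫ actPair v w := by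
  have h := congrArg (fun k => (A ⊗ A) ◁ (α_ A A (V ⊗ W)).hom ≫ (α_ A A _).hom ≫ k)
    (actPair_assoc_head hv hw)
  rw [whiskerRight_actPair_eq_head m m (V ⊗ W), actPair_eq_head v w]
  refine Eq.trans ?_ (h.trans ?_)
  · simp
  · simp

end ActPair

section CanonicalIdempotent

variable {𝒞 : Type u} [Category.{v} 𝒞] [MonoidalCategory 𝒞] {L V W : 𝒞}

theorem sIdem_eq_head (μ : L ⊗ L ⟶ L) (ε : L ⟶ 𝟙_ 𝒞) (τbar : V ⟶ V ⊗ L) (τ : W ⟶ L ⊗ W) :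
    sIdem μ ε τbar τ =
      head₁₂ τbar W ≫ V ◁ L ◁ τ ≫ V ◁ head₂₁ μ W ≫ V ◁ head₁₀ ε W := by
  simp [sIdem, head₁₂, head₂₁, head₁₀]

theorem whiskerRight_sIdem_eq_head (μ : L ⊗ L ⟶ L) (ε : L ⟶ 𝟙_ 𝒞) (τbar : V ⟶ V ⊗ L)
    (τ : W ⟶ L ⊗ W) (Y : 𝒞) :
    sIdem μ ε τbar τ ▷ Y =
      (α_ V W Y).hom ≫ head₁₂ τbar (W ⊗ Y) ≫ V ◁ L ◁ head₁₂ τ Y ≫ V ◁ head₂₁ μ (W ⊗ Y) ≫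
        V ◁ head₁₀ ε (W ⊗ Y) ≫ (α_ V W Y).inv := by
  simp only [sIdem_eq_head, head₁₂, head₂₁, head₁₀]
  monoidal

end CanonicalIdempotent

section Coaction

variable {A L V W : C}

theorem head₂₁_comp_head₁₂_of_coaction {τA : A ⟶ A ⊗ L} {τV : V ⟶ V ⊗ L} {v : A ⊗ V ⟶ V}
    (hv : v ≫ τV = τA ▷ V ≫ (α_ A L V).hom ≫ A ◁ (β_ L V).hom ≫ (α_ A V L).inv ≫ v ▷ L)
    (Y : C) :
    head₂₁ v Y ≫ head₁₂ τV Y =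
      head₁₂ τA (V ⊗ Y) ≫ A ◁ head₂₂ (β_ L V).hom Y ≫ head₂₁ v (L ⊗ Y) := by
  have h := congrArg (fun k => (α_ A V Y).inv ≫ k ▷ Y ≫ (α_ V L Y).hom) hv
  refine Eq.trans ?_ (h.trans ?_)
  · simp [head₂₁, head₁₂]
  · simp only [head₂₁, head₁₂, head₂₂]
    monoidal

theorem actPair_word_comp_sIdem (μ : L ⊗ L ⟶ L) (ε : L ⟶ 𝟙_ C) {τbar : A ⟶ A ⊗ L}
    {τ : A ⟶ L ⊗ A} {τV : V ⟶ V ⊗ L} {τW : W ⟶ L ⊗ W} {v : A ⊗ V ⟶ V} {w : A ⊗ W ⟶ W}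
    (hv : v ≫ τV = τbar ▷ V ≫ (α_ A L V).hom ≫ A ◁ (β_ L V).hom ≫ (α_ A V L).inv ≫ v ▷ L)
    (hw : w ≫ τW = τ ▷ W ≫ (α_ L A W).hom ≫ L ◁ w) :
    A ◁ head₂₂ (β_ A V).hom W ≫ head₂₁ v (A ⊗ W) ≫ V ◁ w ≫ sIdem μ ε τV τW =
      head₁₂ τbar (A ⊗ (V ⊗ W)) ≫ A ◁ L ◁ head₁₂ τ (V ⊗ W) ≫ A ◁ head₂₁ μ _ ≫
        A ◁ head₁₀ ε _ ≫ A ◁ head₂₂ (β_ A V).hom W ≫ head₂₁ v (A ⊗ W) ≫ V ◁ w := by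
  have hw' : w ≫ τW = head₁₂ τ W ≫ L ◁ w := by rw [hw, head₁₂, assoc]
  rw [sIdem_eq_head]
  calc
    _ = A ◁ head₂₂ (β_ A V).hom W ≫ (head₂₁ v _ ≫ head₁₂ τV _) ≫ V ◁ L ◁ (w ≫ τW) ≫
          V ◁ head₂₁ μ W ≫ V ◁ head₁₀ ε W := by
        simp
    _ = head₁₂ τbar _ ≫ A ◁ (L ◁ (head₂₂ (β_ A V).hom W ≫ V ◁ head₁₂ τ W) ≫
          head₂₂ (β_ L V).hom _ ≫ V ◁ head₂₁ μ _ ≫ V ◁ head₁₀ ε _) ≫ head₂₁ v _ ≫ V ◁ w := by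
        rw [head₂₁_comp_head₁₂_of_coaction hv, hw']
        simp [← whiskerLeft_comp, ← whiskerLeft_comp_assoc]
    _ = head₁₂ τbar _ ≫ A ◁ (L ◁ (head₁₂ τ _ ≫ L ◁ head₂₂ (β_ A V).hom W) ≫
          (L ◁ head₂₂ (β_ L V).hom _ ≫ head₂₂ (β_ L V).hom _ ≫ V ◁ head₂₁ μ _) ≫
            V ◁ head₁₀ ε _) ≫ head₂₁ v _ ≫ V ◁ w := by
        rw [head₂₂_braiding_comp_whiskerLeft_head₁₂]
        simp [← whiskerLeft_comp, ← whiskerLeft_comp_assoc]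
    _ = head₁₂ τbar _ ≫ A ◁ (L ◁ (head₁₂ τ _ ≫ L ◁ head₂₂ (β_ A V).hom W) ≫ head₂₁ μ _ ≫
          head₂₂ (β_ L V).hom _ ≫ V ◁ head₁₀ ε _) ≫ head₂₁ v _ ≫ V ◁ w := by
        rw [← head₂₁_comp_head₂₂_braiding]
        simp only [assoc]
    _ = _ := by
        rw [head₂₂_braiding_comp_whiskerLeft_head₁₀]
        simp [← whiskerLeft_comp, ← whiskerLeft_comp_assoc]

theorem actPair_comp_sIdem (μ : L ⊗ L ⟶ L) (ε : L ⟶ 𝟙_ C) {τbar : A ⟶ A ⊗ L}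
    {τ : A ⟶ L ⊗ A} {τV : V ⟶ V ⊗ L} {τW : W ⟶ L ⊗ W} {v : A ⊗ V ⟶ V} {w : A ⊗ W ⟶ W}
    (hv : v ≫ τV = τbar ▷ V ≫ (α_ A L V).hom ≫ A ◁ (β_ L V).hom ≫ (α_ A V L).inv ≫ v ▷ L)
    (hw : w ≫ τW = τ ▷ W ≫ (α_ L A W).hom ≫ L ◁ w) :
    actPair v w ≫ sIdem μ ε τV τW = sIdem μ ε τbar τ ▷ (V ⊗ W) ≫ actPair v w := by
  rw [whiskerRight_sIdem_eq_head, actPair_eq_head]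
  simp only [assoc, Iso.inv_hom_id_assoc]
  rw [actPair_word_comp_sIdem μ ε hv hw]

end Coaction

namespace RWMB

variable {A : C} {𝒴 : Set C} (S : RWMB A 𝒴)

local notation "σ" => Iso.hom (BraidedCategory.braiding _ _)
local notation "σ⁻¹" => Iso.inv (BraidedCategory.braiding _ _)
local notation "⟪" f "⟫" => head₂₂ f _
local notation "⟪" f "⟫₁" => head₂₁ f _
local notation "⟪" f "⟫₀" => head₁₀ f _

theorem head₂₁_m_eq (Y : C) : head₂₁ S.m Y = ⟪S.t₁⟫ ≫ ⟪S.j⟫₀ := by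
  conv_lhs => rw [S.hm₁]
  simp only [head₂₁, head₂₂, head₁₀]
  monoidal

theorem m_eq_t₁_comp_head₁₀ : S.m = S.t₁ ≫ ⟪S.j⟫₀ :=
  S.hm₁

theorem head₂₁_m_comp_t₁ : head₂₁ S.m A ≫ S.t₁ = A ◁ S.t₁ ≫ dOne S.m S.t₁ := by
  calc
    _ = (⟪S.t₁⟫ ≫ A ◁ S.t₁) ≫ ⟪S.j⟫₀ := by
        rw [head₂₁_m_eq]
        simp
    _ = A ◁ S.t₁ ≫ (⟪σ⟫ ≫ A ◁ S.t₁ ≫ ⟪σ⁻¹⟫) ≫ ⟪S.t₁⟫ ≫ ⟪S.j⟫₀ := by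
        have h := S.ax1
        simp only [wl_eq_head₂₂] at h
        rw [← h]
        simp only [assoc]
    _ = _ := by
        rw [head₂₂_braiding_conj, dOne_eq_head, head₂₁_m_eq]
        simp

theorem head₂₁_m_comp_head₂₂_t₁ (Y : C) :
    head₂₁ S.m (A ⊗ Y) ≫ ⟪S.t₁⟫ =
      A ◁ ⟪S.t₁⟫ ≫ A ◁ ⟪σ⁻¹⟫ ≫ ⟪S.t₁⟫ ≫ A ◁ ⟪σ⟫ ≫ ⟪S.m⟫₁ := by
  have h := congrArg (fun k => A ◁ (α_ A A Y).inv ≫ (α_ A (A ⊗ A) Y).inv ≫ k ▷ Y ≫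
    (α_ A A Y).hom) S.head₂₁_m_comp_t₁
  rw [dOne_eq_head] at h
  refine Eq.trans ?_ (h.trans ?_)
  · simp only [head₂₁, head₂₂]
    monoidal
  · simp only [head₂₁, head₂₂]
    monoidal

theorem m_assoc : A ◁ S.m ≫ S.m = (α_ A A A).inv ≫ S.m ▷ A ≫ S.m := by
  have h8 : dOne S.m S.t₁ ≫ ⟪S.j⟫₀ = A ◁ S.e₁ ≫ A ◁ ⟪S.j⟫₀ ≫ S.m := by
    rw [← cancel_epi (A ◁ (β_ A A).hom)]
    simpa [dOne, head₁₀] using S.ax8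
  symm
  calc
    _ = (head₂₁ S.m A ≫ S.t₁) ≫ ⟪S.j⟫₀ := by
        conv_lhs => rw [← assoc, ← head₂₁]
        rw [assoc, ← m_eq_t₁_comp_head₁₀]
    _ = A ◁ ((S.t₁ ≫ S.e₁) ≫ ⟪S.j⟫₀) ≫ S.m := by
        rw [head₂₁_m_comp_t₁, assoc, h8]
        simp
    _ = A ◁ S.m ≫ S.m := by
        rw [S.ax3, ← m_eq_t₁_comp_head₁₀]

theorem head₂₁_comp_m : head₂₁ S.m A ≫ S.m = A ◁ S.m ≫ S.m := by
  rw [m_assoc, head₂₁, assoc]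

theorem head₂₁_m_assoc (Y : C) : head₂₁ S.m (A ⊗ Y) ≫ ⟪S.m⟫₁ = A ◁ ⟪S.m⟫₁ ≫ ⟪S.m⟫₁ :=
  head₂₁_comp_head₂₁_of_assoc S.m_assoc Y

theorem dOne_tail_comp_head₂₁_m :
    A ◁ ⟪σ⁻¹⟫ ≫ ⟪S.t₁⟫ ≫ A ◁ ⟪σ⟫ ≫ head₂₁ S.m (A ⊗ A) ≫ A ◁ σ ≫ ⟪S.m⟫₁ =
    A ◁ A ◁ σ ≫ A ◁ ⟪S.m⟫₁ ≫ dOne S.m S.t₁ := by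
  rw [dOne_eq_head]
  calc
    _ = A ◁ ⟪σ⁻¹⟫ ≫ ⟪S.t₁⟫ ≫ A ◁ ⟪σ⟫ ≫ A ◁ A ◁ σ ≫ head₂₁ S.m (A ⊗ A) ≫ ⟪S.m⟫₁ := by
        simp
    _ = A ◁ ⟪σ⁻¹⟫ ≫ ⟪S.t₁⟫ ≫ A ◁ (⟪σ⟫ ≫ A ◁ σ ≫ ⟪S.m⟫₁) ≫ ⟪S.m⟫₁ := by
        rw [head₂₁_m_assoc]
        simp
    _ = A ◁ (⟪σ⁻¹⟫ ≫ A ◁ S.m) ≫ ⟪S.t₁⟫ ≫ A ◁ σ ≫ ⟪S.m⟫₁ := by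
        rw [← whiskerLeft_comp_braiding, whiskerLeft_comp, assoc, head₂₂_exchange_assoc]
        simp
    _ = _ := by
        rw [head₂₂_braiding_inv_comp_whiskerLeft]
        simp

theorem dOne_assoc :
    A ◁ dOne S.m S.t₁ ≫ dOne S.m S.t₁ =
      (α_ A A (A ⊗ A)).inv ≫ S.m ▷ (A ⊗ A) ≫ dOne S.m S.t₁ := by
  symm
  calc
    _ = A ◁ A ◁ σ⁻¹ ≫ (head₂₁ S.m (A ⊗ A) ≫ ⟪S.t₁⟫) ≫ A ◁ σ ≫ ⟪S.m⟫₁ := by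
        rw [← assoc, ← head₂₁, dOne_eq_head]
        simp
    _ = A ◁ A ◁ σ⁻¹ ≫ A ◁ ⟪S.t₁⟫ ≫
          (A ◁ ⟪σ⁻¹⟫ ≫ ⟪S.t₁⟫ ≫ A ◁ ⟪σ⟫ ≫ ⟪S.m⟫₁ ≫ A ◁ σ ≫ ⟪S.m⟫₁) := by
        rw [head₂₁_m_comp_head₂₂_t₁]
        simp only [assoc]
    _ = _ := by
        rw [dOne_tail_comp_head₂₁_m]
        simp [dOne_eq_head]

theorem head₂₂_t₂_comp_whiskerLeft_head₂₁_m (Y : C) :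
    head₂₂ S.t₂ (A ⊗ Y) ≫ A ◁ ⟪S.m⟫₁ = A ◁ ⟪S.t₁⟫ ≫ ⟪S.m⟫₁ := by
  have h := congrArg (fun k => A ◁ (α_ A A Y).inv ≫ (α_ A (A ⊗ A) Y).inv ≫ k ▷ Y ≫
    (α_ A A Y).hom) S.hc12
  rw [wl_eq_head₂₂, ml_eq_head₂₁] at h
  refine Eq.trans ?_ (h.symm.trans ?_)
  · simp only [head₂₁, head₂₂]
    monoidal
  · simp only [head₂₁, head₂₂]
    monoidal

theorem dTwo_tail_comp_actPair_word :
    ⟪σ⁻¹⟫ ≫ A ◁ ⟪S.t₂⟫ ≫ ⟪σ⟫ ≫ A ◁ ⟪S.m⟫₁ ≫ A ◁ ⟪σ⟫ ≫ ⟪S.m⟫₁ ≫ A ◁ S.m =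
      A ◁ A ◁ A ◁ σ⁻¹ ≫ ⟪σ⁻¹⟫ ≫ A ◁ (⟪S.t₂⟫ ≫ A ◁ ⟪S.m⟫₁) ≫ ⟪σ⟫ ≫ A ◁ A ◁ σ ≫
        A ◁ ⟪σ⟫ ≫ ⟪S.m⟫₁ ≫ A ◁ S.m := by
  calc
    _ = ⟪σ⁻¹⟫ ≫ A ◁ ⟪S.t₂⟫ ≫ ⟪σ⟫ ≫ A ◁ (⟪S.m⟫₁ ≫ ⟪σ⟫) ≫ ⟪S.m⟫₁ ≫ A ◁ S.m := by
        simp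
    _ = ⟪σ⁻¹⟫ ≫ A ◁ ⟪S.t₂⟫ ≫ ⟪σ⟫ ≫ A ◁ (A ◁ ⟪σ⟫ ≫ ⟪σ⟫) ≫ ⟪S.m⟫₁ ≫ A ◁ (⟪S.m⟫₁ ≫ S.m) := by
        rw [head₂₁_comp_head₂₂_braiding]
        simp
    _ = ⟪σ⁻¹⟫ ≫ A ◁ ⟪S.t₂⟫ ≫ ⟪σ⟫ ≫ A ◁ A ◁ (⟪σ⟫ ≫ A ◁ S.m) ≫ A ◁ ⟪σ⟫ ≫ ⟪S.m⟫₁ ≫ A ◁ S.m := by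
        rw [head₂₁_comp_m]
        simp [-whiskerLeft_comp, ← whiskerLeft_comp_assoc]
    _ = ⟪σ⁻¹⟫ ≫ A ◁ ⟪S.t₂⟫ ≫ ⟪σ⟫ ≫ A ◁ A ◁ (A ◁ σ⁻¹ ≫ ⟪S.m⟫₁ ≫ σ) ≫
          A ◁ ⟪σ⟫ ≫ ⟪S.m⟫₁ ≫ A ◁ S.m := by
        rw [head₂₁_comp_braiding]
        simp
    _ = _ := by
        simp [← whiskerLeft_comp, ← whiskerLeft_comp_assoc]

theorem dTwo_comp_actPair_word :
    ⟪σ⁻¹⟫ ≫ A ◁ ⟪S.t₂⟫ ≫ ⟪σ⟫ ≫ A ◁ ⟪S.m⟫₁ ≫ A ◁ ⟪σ⟫ ≫ ⟪S.m⟫₁ ≫ A ◁ S.m =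
      A ◁ A ◁ dOne S.m S.t₁ ≫ A ◁ ⟪σ⟫ ≫ ⟪S.m⟫₁ ≫ A ◁ S.m := by
  rw [dTwo_tail_comp_actPair_word, dOne_eq_head]
  calc
    _ = A ◁ A ◁ A ◁ σ⁻¹ ≫ ⟪σ⁻¹⟫ ≫ A ◁ A ◁ ⟪S.t₁⟫ ≫ (A ◁ ⟪S.m⟫₁ ≫ ⟪σ⟫) ≫ A ◁ A ◁ σ ≫
          A ◁ ⟪σ⟫ ≫ ⟪S.m⟫₁ ≫ A ◁ S.m := by
        rw [head₂₂_t₂_comp_whiskerLeft_head₂₁_m]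
        simp
    _ = A ◁ A ◁ A ◁ σ⁻¹ ≫ A ◁ A ◁ ⟪S.t₁⟫ ≫ A ◁ (⟪σ⟫ ≫ A ◁ A ◁ σ ≫ A ◁ ⟪σ⟫) ≫
          (⟪S.m⟫₁ ≫ ⟪S.m⟫₁) ≫ A ◁ S.m := by
        rw [whiskerLeft_head₂₁_comp_head₂₂_braiding]
        simp [← whiskerLeft_comp, ← whiskerLeft_comp_assoc]
    _ = A ◁ A ◁ A ◁ σ⁻¹ ≫ A ◁ A ◁ ⟪S.t₁⟫ ≫ A ◁ A ◁ A ◁ σ ≫ A ◁ (⟪σ⟫ ≫ A ◁ ⟪σ⟫ ≫ ⟪S.m⟫₁) ≫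
          ⟪S.m⟫₁ ≫ A ◁ S.m := by
        rw [head₂₁_m_assoc]
        simp [← whiskerLeft_comp, ← whiskerLeft_comp_assoc]
    _ = _ := by
        rw [← whiskerLeft_head₂₁_comp_head₂₂_braiding]
        simp [-whiskerLeft_comp, ← whiskerLeft_comp_assoc]

theorem dTwo_comp_actPair :
    ((α_ A A A).hom ≫ dTwo S.m S.t₂) ▷ (A ⊗ A) ≫ actPair S.m S.m =
      (α_ (A ⊗ A) A (A ⊗ A)).hom ≫ (A ⊗ A) ◁ dOne S.m S.t₁ ≫ actPair S.m S.m := by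
  have h := congrArg (fun k => (α_ (A ⊗ A) A (A ⊗ A)).hom ≫ (α_ A A (A ⊗ (A ⊗ A))).hom ≫ k)
    S.dTwo_comp_actPair_word
  rw [actPair_eq_head]
  refine Eq.trans ?_ (h.trans ?_)
  · simp only [dTwo_eq_head, head₂₂, head₂₁]
    monoidal
  · simp

theorem whiskerLeft_e₁_comp_actPair :
    (A ⊗ A) ◁ S.e₁ ≫ actPair S.m S.m = S.e₂ ▷ (A ⊗ A) ≫ actPair S.m S.m := by
  simpa [midSw, actPair] using S.hecomp

theorem e₁_comp_rightLinear {D : C} {R : (A ⊗ A) ⊗ D ⟶ A ⊗ A}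
    (hR : (A ⊗ A) ◁ R ≫ actPair S.m S.m =
      (α_ (A ⊗ A) (A ⊗ A) D).inv ≫ actPair S.m S.m ▷ D ≫ R) :
    S.e₁ ▷ D ≫ R = R ≫ S.e₁ :=
  whiskerRight_comp_eq_comp_of_rightLinear
    (isFaithfulAction_actPair S.ndl S.ndl S.memA S.memA) S.whiskerLeft_e₁_comp_actPair hR

theorem head₂₂_e₁_comp_whiskerLeft_m : ⟪S.e₁⟫ ≫ A ◁ S.m = A ◁ S.m ≫ S.e₁ := by
  have h := S.e₁_comp_rightLinear (R := (α_ A A A).hom ≫ A ◁ S.m) ?_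
  · simpa [head₂₂] using congrArg (fun k => (α_ A A A).inv ≫ k) h
  have word : A ◁ A ◁ A ◁ S.m ≫ A ◁ ⟪σ⟫ ≫ ⟪S.m⟫₁ ≫ A ◁ S.m =
      A ◁ ⟪σ⟫ ≫ ⟪S.m⟫₁ ≫ A ◁ (⟪S.m⟫₁ ≫ S.m) := by
    rw [head₂₁_comp_m]
    simp [-whiskerLeft_comp, ← whiskerLeft_comp_assoc]
  rw [whiskerRight_actPair_eq_head, actPair_eq_head]
  simpa using congrArg (fun k => A ◁ A ◁ (α_ A A A).hom ≫ k) word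

theorem actPair_m_word_comp_braiding_m :
    A ◁ A ◁ (A ◁ σ ≫ ⟪S.m⟫₁) ≫ A ◁ ⟪σ⟫ ≫ ⟪S.m⟫₁ ≫ A ◁ S.m =
      A ◁ ⟪σ⟫ ≫ ⟪S.m⟫₁ ≫ A ◁ ⟪S.m⟫₁ ≫ A ◁ σ ≫ head₂₁ S.m A := by
  symm
  calc
    _ = A ◁ ⟪σ⟫ ≫ ⟪S.m⟫₁ ≫ A ◁ (⟪S.m⟫₁ ≫ σ) ≫ head₂₁ S.m A := by
        simp
    _ = A ◁ (⟪σ⟫ ≫ A ◁ A ◁ σ ≫ A ◁ ⟪σ⟫) ≫ (⟪S.m⟫₁ ≫ ⟪S.m⟫₁) ≫ A ◁ S.m := by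
        rw [head₂₁_comp_braiding]
        simp [← whiskerLeft_comp, ← whiskerLeft_comp_assoc]
    _ = A ◁ A ◁ A ◁ σ ≫ A ◁ (⟪σ⟫ ≫ A ◁ ⟪σ⟫ ≫ ⟪S.m⟫₁) ≫ ⟪S.m⟫₁ ≫ A ◁ S.m := by
        rw [head₂₁_m_assoc]
        simp [← whiskerLeft_comp, ← whiskerLeft_comp_assoc]
    _ = _ := by
        rw [← whiskerLeft_head₂₁_comp_head₂₂_braiding]
        simp

theorem head₂₂_e₁_comp_braiding_m :
    ⟪S.e₁⟫ ≫ A ◁ σ ≫ head₂₁ S.m A = A ◁ σ ≫ ⟪S.m⟫₁ ≫ S.e₁ := by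
  have h := S.e₁_comp_rightLinear (R := (α_ A A A).hom ≫ A ◁ σ ≫ head₂₁ S.m A) ?_
  · simpa [head₂₂] using congrArg (fun k => (α_ A A A).inv ≫ k) h
  rw [whiskerRight_actPair_eq_head, actPair_eq_head]
  simpa using congrArg (fun k => A ◁ A ◁ (α_ A A A).hom ≫ k) S.actPair_m_word_comp_braiding_m

theorem dOne_comp_e₁ : dOne S.m S.t₁ ≫ S.e₁ = dOne S.m S.t₁ := by
  rw [dOne_eq_head]
  have h : head₂₂ S.t₁ A ≫ ⟪S.e₁⟫ = ⟪S.t₁⟫ := by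
    simp [head₂₂, ← comp_whiskerRight_assoc, S.ax3]
  simp only [assoc]
  rw [← head₂₂_e₁_comp_braiding_m, ← assoc ⟪S.t₁⟫, h]

theorem head₂₂_t₄_comp_whiskerLeft_head₂₁_m (Y : C) :
    head₂₂ S.t₄ (A ⊗ Y) ≫ A ◁ ⟪S.m⟫₁ = A ◁ ⟪S.t₁⟫ ≫ ⟪σ⟫ ≫ ⟪S.m⟫₁ := by
  have h := congrArg (fun k => A ◁ (α_ A A Y).inv ≫ (α_ A (A ⊗ A) Y).inv ≫ k ▷ Y ≫
    (α_ A A Y).hom) S.hc14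
  rw [wl_eq_head₂₂, wl_eq_head₂₂, ml_eq_head₂₁] at h
  refine Eq.trans ?_ (h.symm.trans ?_)
  · simp only [head₂₁, head₂₂]
    monoidal
  · simp only [head₂₁, head₂₂]
    monoidal

theorem head₂₂_t₄_comp_whiskerLeft_head₁₀ (Y : C) :
    head₂₂ S.t₄ Y ≫ A ◁ ⟪S.j⟫₀ = ⟪σ⁻¹⟫ ≫ ⟪S.m⟫₁ := by
  have h : head₂₁ S.m Y = ⟪σ⟫ ≫ head₂₂ S.t₄ Y ≫ A ◁ ⟪S.j⟫₀ := by
    conv_lhs => rw [S.hm₄]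
    simp only [head₂₁, head₂₂, head₁₀]
    monoidal
  rw [h, head₂₂_inv_hom_assoc]

theorem head₂₂_t₄_comp_whiskerLeft_e₁_comp_m :
    head₂₂ S.t₄ (A ⊗ A) ≫ A ◁ ⟪S.e₁⟫ ≫ A ◁ A ◁ σ ≫ A ◁ ⟪S.m⟫₁ =
      A ◁ ⟪S.e₁⟫ ≫ ⟪S.t₄⟫ ≫ A ◁ A ◁ σ ≫ A ◁ ⟪S.m⟫₁ := by
  have ax6 := S.ax6
  simp only [wl_eq_head₂₂] at ax6
  calc
    _ = ⟪S.t₄⟫ ≫ A ◁ (⟪S.e₁⟫ ≫ A ◁ σ ≫ ⟪S.m⟫₁) := by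
        simp
    _ = A ◁ A ◁ σ ≫ (⟪S.t₄⟫ ≫ A ◁ ⟪S.m⟫₁) ≫ A ◁ S.e₁ := by
        rw [head₂₂_e₁_comp_braiding_m]
        simp
    _ = A ◁ A ◁ σ ≫ A ◁ (⟪S.t₁⟫ ≫ A ◁ S.e₁) ≫ ⟪σ⟫ ≫ ⟪S.m⟫₁ := by
        rw [head₂₂_t₄_comp_whiskerLeft_head₂₁_m]
        simp
    _ = A ◁ ⟪S.e₁⟫ ≫ A ◁ A ◁ σ ≫ A ◁ ⟪S.t₁⟫ ≫ ⟪σ⟫ ≫ ⟪S.m⟫₁ := by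
        rw [ax6]
        simp
    _ = _ := by
        rw [← head₂₂_t₄_comp_whiskerLeft_head₂₁_m]
        simp

theorem head₂₂_t₄_comp_whiskerLeft_e₁ :
    ⟪S.t₄⟫ ≫ A ◁ S.e₁ = A ◁ S.e₁ ≫ ⟪S.t₄⟫ := by
  apply S.ndr.eq_of_whiskerRight_comp_braiding S.memAA
  have h := congrArg (fun k => (α_ A (A ⊗ A) A).hom ≫ A ◁ (α_ A A A).hom ≫ k)
    S.head₂₂_t₄_comp_whiskerLeft_e₁_comp_m
  refine Eq.trans ?_ (h.trans ?_)
  · simp only [head₂₁, head₂₂]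
    monoidal
  · simp only [head₂₁, head₂₂]
    monoidal

theorem braiding_comp_t₄_e₁_head₁₀ :
    ⟪σ⟫ ≫ head₂₂ S.t₄ A ≫ A ◁ S.e₁ ≫ A ◁ ⟪S.j⟫₀ = ⟪S.m⟫₁ ≫ S.e₁ := by
  calc
    _ = ⟪σ⟫ ≫ A ◁ S.e₁ ≫ ⟪S.t₄⟫ ≫ A ◁ ⟪S.j⟫₀ := by
        rw [← assoc ⟪S.t₄⟫, head₂₂_t₄_comp_whiskerLeft_e₁, assoc]
    _ = (⟪σ⟫ ≫ A ◁ S.e₁ ≫ ⟪σ⁻¹⟫) ≫ ⟪S.m⟫₁ := by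
        rw [head₂₂_t₄_comp_whiskerLeft_head₁₀]
        simp only [assoc]
    _ = A ◁ σ⁻¹ ≫ ⟪S.e₁⟫ ≫ A ◁ σ ≫ ⟪S.m⟫₁ := by
        rw [head₂₂_braiding_conj]
        simp only [assoc]
    _ = _ := by
        rw [head₂₂_e₁_comp_braiding_m]
        simp

theorem braiding_comp_head₂₂_t₄_e₁_head₁₀ (Y : C) :
    ⟪σ⟫ ≫ head₂₂ S.t₄ (A ⊗ Y) ≫ A ◁ ⟪S.e₁⟫ ≫ A ◁ ⟪S.j⟫₀ = ⟪S.m⟫₁ ≫ ⟪S.e₁⟫ := by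
  have h := congrArg (fun k => A ◁ (α_ A A Y).inv ≫ (α_ A (A ⊗ A) Y).inv ≫ k ▷ Y ≫
    (α_ A A Y).hom) S.braiding_comp_t₄_e₁_head₁₀
  refine Eq.trans ?_ (h.trans ?_)
  · simp only [head₂₂, head₁₀]
    monoidal
  · simp only [head₂₁, head₂₂]
    monoidal

theorem head₂₁_m_comp_head₁₂ {L : C} {p : A ⟶ L} {τbar : A ⟶ A ⊗ L}
    (hτbar : S.m ≫ τbar = (β_ A A).hom ≫ S.t₄ ≫ A ◁ p) (Y : C) :
    head₂₁ S.m Y ≫ head₁₂ τbar Y = ⟪σ⟫ ≫ ⟪S.t₄⟫ ≫ A ◁ p ▷ Y := by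
  have h := congrArg (fun k => (α_ A A Y).inv ≫ k ▷ Y ≫ (α_ A L Y).hom) hτbar
  refine Eq.trans ?_ (h.trans ?_)
  · simp [head₂₁, head₁₂]
  · simp [head₂₂]

theorem whiskerRight_comp_μ_comp_ε {L : C} {p : A ⟶ L} {n₁ : L ⊗ A ⟶ A}
    (hn₁ : p ▷ A ≫ n₁ = S.piL1) {μ : L ⊗ L ⟶ L} (hμ : L ◁ p ≫ μ = n₁ ≫ p) {ε : L ⟶ 𝟙_ C}
    (hε : p ≫ ε = S.j) (Y : C) :
    p ▷ (A ⊗ Y) ≫ L ◁ p ▷ Y ≫ head₂₁ μ Y ≫ head₁₀ ε Y = ⟪S.e₁⟫ ≫ ⟪S.j⟫₀ ≫ ⟪S.j⟫₀ := by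
  have plain : p ▷ A ≫ L ◁ p ≫ μ ≫ ε = S.e₁ ≫ ⟪S.j⟫₀ ≫ S.j := by
    rw [← assoc (L ◁ p), hμ, assoc, hε, ← assoc, hn₁, piL1, head₁₀]
    simp only [assoc]
  have h := congrArg (fun k => (α_ A A Y).inv ≫ k ▷ Y ≫ (λ_ Y).hom) plain
  refine Eq.trans ?_ (h.trans ?_)
  · simp only [head₂₁, head₁₀]
    monoidal
  · simp only [head₂₂, head₁₀]
    monoidal

theorem m_tensor_m_comp_sIdem {L : C} {p : A ⟶ L} {n₁ : L ⊗ A ⟶ A}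
    (hn₁ : p ▷ A ≫ n₁ = S.piL1) {μ : L ⊗ L ⟶ L} (hμ : L ◁ p ≫ μ = n₁ ≫ p) {ε : L ⟶ 𝟙_ C}
    (hε : p ≫ ε = S.j) {τ : A ⟶ L ⊗ A} (hτ : S.m ≫ τ = S.t₁ ≫ p ▷ A) {τbar : A ⟶ A ⊗ L}
    (hτbar : S.m ≫ τbar = (β_ A A).hom ≫ S.t₄ ≫ A ◁ p) :
    (head₂₁ S.m (A ⊗ A) ≫ A ◁ S.m) ≫ sIdem μ ε τbar τ =
      (head₂₁ S.m (A ⊗ A) ≫ A ◁ S.m) ≫ S.e₁ := by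
  have ax5 := S.ax5
  rw [wl_eq_head₂₂] at ax5
  rw [sIdem_eq_head]
  calc
    _ = (⟪S.m⟫₁ ≫ head₁₂ τbar (A ⊗ A)) ≫ A ◁ L ◁ (S.m ≫ τ) ≫ A ◁ head₂₁ μ A ≫
          A ◁ head₁₀ ε A := by
        simp
    _ = ⟪σ⟫ ≫ ⟪S.t₄⟫ ≫ A ◁ A ◁ S.t₁ ≫ A ◁ (p ▷ (A ⊗ A) ≫ L ◁ p ▷ A ≫ head₂₁ μ A ≫
          head₁₀ ε A) := by
        rw [S.head₂₁_m_comp_head₁₂ hτbar, hτ]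
        simp only [whiskerLeft_comp, assoc]
        rw [← whiskerLeft_comp_assoc A (p ▷ (A ⊗ A)) (L ◁ S.t₁), ← whisker_exchange,
          whiskerLeft_comp_assoc]
    _ = ⟪σ⟫ ≫ ⟪S.t₄⟫ ≫ A ◁ (A ◁ S.t₁ ≫ ⟪S.e₁⟫) ≫ A ◁ ⟪S.j⟫₀ ≫ A ◁ head₁₀ S.j A := by
        rw [S.whiskerRight_comp_μ_comp_ε hn₁ hμ hε]
        simp only [whiskerLeft_comp, assoc]
    _ = (⟪σ⟫ ≫ ⟪S.t₄⟫ ≫ A ◁ ⟪S.e₁⟫ ≫ A ◁ ⟪S.j⟫₀) ≫ A ◁ (S.t₁ ≫ ⟪S.j⟫₀) := by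
        rw [ax5]
        simp [← whiskerLeft_comp, ← whiskerLeft_comp_assoc]
    _ = _ := by
        rw [braiding_comp_head₂₂_t₄_e₁_head₁₀, ← m_eq_t₁_comp_head₁₀, assoc,
          head₂₂_e₁_comp_whiskerLeft_m, assoc]

theorem sIdem_eq_e₁
    (presL : ∀ X : C, PreservesColimitsOfShape WalkingParallelPair (tensorLeft X))
    (presR : ∀ X : C, PreservesColimitsOfShape WalkingParallelPair (tensorRight X))
    (hm : Nonempty (RegularEpi S.m)) {L : C} {p : A ⟶ L} {n₁ : L ⊗ A ⟶ A}
    (hn₁ : p ▷ A ≫ n₁ = S.piL1) {μ : L ⊗ L ⟶ L} (hμ : L ◁ p ≫ μ = n₁ ≫ p) {ε : L ⟶ 𝟙_ C}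
    (hε : p ≫ ε = S.j) {τ : A ⟶ L ⊗ A} (hτ : S.m ≫ τ = S.t₁ ≫ p ▷ A) {τbar : A ⟶ A ⊗ L}
    (hτbar : S.m ≫ τbar = (β_ A A).hom ≫ S.t₄ ≫ A ◁ p) :
    sIdem μ ε τbar τ = S.e₁ := by
  have : Epi (S.m ▷ (A ⊗ A)) :=
    epi_of_nonempty_regularEpi (nonempty_regularEpi_map (tensorRight (A ⊗ A)) hm)
  have : Epi (A ◁ S.m) := epi_of_nonempty_regularEpi (nonempty_regularEpi_map (tensorLeft A) hm)
  have : Epi (head₂₁ S.m (A ⊗ A) ≫ A ◁ S.m) := by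
    rw [head₂₁]
    infer_instance
  rw [← cancel_epi (head₂₁ S.m (A ⊗ A) ≫ A ◁ S.m), S.m_tensor_m_comp_sIdem hn₁ hμ hε hτ hτbar]

end RWMB

theorem lemma_action_b0_general
    (presL : ∀ X : C, PreservesColimitsOfShape WalkingParallelPair (tensorLeft X))
    (presR : ∀ X : C, PreservesColimitsOfShape WalkingParallelPair (tensorRight X))
    (regcomp : ∀ {X Y Z : C} (f : X ⟶ Y) (g : Y ⟶ Z),
      Nonempty (RegularEpi f) → Nonempty (RegularEpi g) → Nonempty (RegularEpi (f ≫ g)))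
    {A : C} {𝒴 : Set C} (S : RWMB A 𝒴) (hmreg : Nonempty (RegularEpi S.m)) {L : C} {p : A ⟶ L}
    {n₁ : L ⊗ A ⟶ A} (hn₁ : p ▷ A ≫ n₁ = S.piL1) {μ : L ⊗ L ⟶ L} (hμ : L ◁ p ≫ μ = n₁ ≫ p)
    {ε : L ⟶ 𝟙_ C} (hε : p ≫ ε = S.j) {τ : A ⟶ L ⊗ A} (hτ : S.m ≫ τ = S.t₁ ≫ p ▷ A)
    {τbar : A ⟶ A ⊗ L} (hτbar : S.m ≫ τbar = (β_ A A).hom ≫ S.t₄ ≫ A ◁ p)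
    (M N : AModule A S.m 𝒴) {τbM : M.V ⟶ M.V ⊗ L}
    (hτbM : M.act ≫ τbM = τbar ▷ M.V ≫ (α_ A L M.V).hom ≫ A ◁ (β_ L M.V).hom ≫
      (α_ A M.V L).inv ≫ M.act ▷ L)
    {τN : N.V ⟶ L ⊗ N.V} (hτN : N.act ≫ τN = τ ▷ N.V ≫ (α_ L A N.V).hom ≫ L ◁ N.act) :
    ∃ b0 : A ⊗ (M.V ⊗ N.V) ⟶ M.V ⊗ N.V,
      (A ◁ actPair M.act N.act ≫ b0 = (α_ A (A ⊗ A) (M.V ⊗ N.V)).inv ≫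
        dOne S.m S.t₁ ▷ (M.V ⊗ N.V) ≫ actPair M.act N.act) ∧
      (∀ b0' : A ⊗ (M.V ⊗ N.V) ⟶ M.V ⊗ N.V,
        A ◁ actPair M.act N.act ≫ b0' = (α_ A (A ⊗ A) (M.V ⊗ N.V)).inv ≫
          dOne S.m S.t₁ ▷ (M.V ⊗ N.V) ≫ actPair M.act N.act → b0' = b0) ∧
      (A ◁ b0 ≫ b0 = (α_ A A (M.V ⊗ N.V)).inv ≫ S.m ▷ (M.V ⊗ N.V) ≫ b0) ∧
      (b0 ≫ sIdem μ ε τbM τN = b0) ∧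
      (A ◁ sIdem μ ε τbM τN ≫ b0 = b0) ∧
      ((α_ (A ⊗ A) A (M.V ⊗ N.V)).inv ≫ (α_ A A A).hom ▷ (M.V ⊗ N.V) ≫
          dTwo S.m S.t₂ ▷ (M.V ⊗ N.V) ≫ actPair M.act N.act =
        (A ⊗ A) ◁ b0 ≫ actPair M.act N.act) := by
  have hreg (X : C) {P Q : C} {f : P ⟶ Q} (hf : Nonempty (RegularEpi f)) :
      Nonempty (RegularEpi (X ◁ f)) := nonempty_regularEpi_map (tensorLeft X) hf
  have hρreg := hreg A (nonempty_regularEpi_actPair presL presR regcomp M.regEpi N.regEpi)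
  have : Epi (A ◁ actPair M.act N.act) := epi_of_nonempty_regularEpi hρreg
  have : Epi (A ◁ A ◁ actPair M.act N.act) := epi_of_nonempty_regularEpi (hreg A hρreg)
  have : Epi ((A ⊗ A) ◁ A ◁ actPair M.act N.act) :=
    epi_of_nonempty_regularEpi (hreg (A ⊗ A) hρreg)
  have hρ := actPair_assoc M.assoc N.assoc
  have hs := actPair_comp_sIdem μ ε hτbM hτN
  rw [S.sIdem_eq_e₁ presL presR hmreg hn₁ hμ hε hτ hτbar] at hs
  obtain ⟨b0, hb0⟩ := exists_whiskerLeft_action_comp_eq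
    (isFaithfulAction_actPair M.nd N.nd M.mem N.mem) hρreg hρ S.dTwo_comp_actPair
  refine ⟨b0, hb0, fun b0' h => ?_, action_assoc_of_whiskerLeft_action_comp S.dOne_assoc hb0,
    action_comp_eq_self hs S.dOne_comp_e₁ hb0, whiskerLeft_comp_action_eq_self hs S.ax4 hb0, ?_⟩
  · rw [← cancel_epi (A ◁ actPair M.act N.act), h, hb0]
  · simpa using whiskerRight_comp_action_eq hρ S.dTwo_comp_actPair hb0

/-- Lemma 4.6: for `A`-modules `(V, v)` and `(W, w)` there is an
associative `A`-action `b⁰ : A ⊗ (V ⊗ W) ⟶ V ⊗ W`, uniquely determined by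
`b⁰ ∘ (1 ⊗ ((v ⊗ w) ∘ (1 ⊗ c ⊗ 1))) = (v ⊗ w) ∘ (1 ⊗ c ⊗ 1) ∘ (d₁ ⊗ 1 ⊗ 1)`,
which absorbs the canonical idempotent `s` on both sides and satisfies the stated
relation with `d₂`. -/
theorem lemma_action_b0
    [HasCoequalizers C]
    (presL : ∀ X : C, PreservesColimitsOfShape WalkingParallelPair (tensorLeft X))
    (presR : ∀ X : C, PreservesColimitsOfShape WalkingParallelPair (tensorRight X))
    (regcomp : ∀ {X Y Z : C} (f : X ⟶ Y) (g : Y ⟶ Z),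
      Nonempty (RegularEpi f) → Nonempty (RegularEpi g) → Nonempty (RegularEpi (f ≫ g)))
    {A : C} {𝒴 : Set C} (S : RWMB A 𝒴)
    (hmreg : Nonempty (RegularEpi S.m))
    (hclosed : ∀ Y Y' : C, Y ∈ 𝒴 → Y' ∈ 𝒴 → (Y ⊗ Y') ∈ 𝒴)
    (L : C) (p : A ⟶ L)
    (hpc : S.piL1 ≫ p = S.piBarR1c ≫ p)
    (hpu : ∀ {X : C} (h : A ⟶ X), S.piL1 ≫ h = S.piBarR1c ≫ h →
      ∃! k : L ⟶ X, p ≫ k = h)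
    (memL : L ∈ 𝒴)
    (n₁ : L ⊗ A ⟶ A) (hn₁ : (p ▷ A) ≫ n₁ = S.piL1)
    (hndn₁ : NdRightOn n₁ 𝒴)
    (n₂ : A ⊗ L ⟶ A) (hn₂ : (A ◁ p) ≫ n₂ = S.piL2)
    (μ : L ⊗ L ⟶ L) (hμ : (L ◁ p) ≫ μ = n₁ ≫ p)
    (δ : L ⟶ L ⊗ L) (hδ : S.m ≫ p ≫ δ = S.t₁ ≫ (p ▷ A) ≫ (L ◁ p))
    (ε : L ⟶ 𝟙_ C) (hε : p ≫ ε = S.j)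
    (hμδ : δ ≫ μ = 𝟙 L)
    (τ : A ⟶ L ⊗ A) (hτ : S.m ≫ τ = S.t₁ ≫ (p ▷ A))
    (τbar : A ⟶ A ⊗ L) (hτbar : S.m ≫ τbar = (β_ A A).hom ≫ S.t₄ ≫ (A ◁ p))
    (M N : AModule A S.m 𝒴)
    (τbM : M.V ⟶ M.V ⊗ L)
    (hτbM : M.act ≫ τbM = (τbar ▷ M.V) ≫ (α_ A L M.V).hom ≫ (A ◁ (β_ L M.V).hom) ≫
      (α_ A M.V L).inv ≫ (M.act ▷ L))
    (τN : N.V ⟶ L ⊗ N.V)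
    (hτN : N.act ≫ τN = (τ ▷ N.V) ≫ (α_ L A N.V).hom ≫ (L ◁ N.act)) :
    ∃ b0 : A ⊗ (M.V ⊗ N.V) ⟶ M.V ⊗ N.V,
      -- the defining property ...
      ((A ◁ actPair M.act N.act) ≫ b0
        = (α_ A (A ⊗ A) (M.V ⊗ N.V)).inv ≫ (dOne S.m S.t₁ ▷ (M.V ⊗ N.V)) ≫
            actPair M.act N.act) ∧
      -- ... which determines `b⁰` uniquely
      (∀ b0' : A ⊗ (M.V ⊗ N.V) ⟶ M.V ⊗ N.V,
        (A ◁ actPair M.act N.act) ≫ b0'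
          = (α_ A (A ⊗ A) (M.V ⊗ N.V)).inv ≫ (dOne S.m S.t₁ ▷ (M.V ⊗ N.V)) ≫
              actPair M.act N.act → b0' = b0) ∧
      -- `b⁰` is an associative `A`-action
      ((A ◁ b0) ≫ b0 = (α_ A A (M.V ⊗ N.V)).inv ≫ (S.m ▷ (M.V ⊗ N.V)) ≫ b0) ∧
      -- `s ∘ b⁰ = b⁰ = b⁰ ∘ (1 ⊗ s)`
      (b0 ≫ sIdem μ ε τbM τN = b0) ∧
      ((A ◁ sIdem μ ε τbM τN) ≫ b0 = b0) ∧
      -- `(v ⊗ w) ∘ (1 ⊗ c ⊗ 1) ∘ (d₂ ⊗ 1 ⊗ 1) = (v ⊗ w) ∘ (1 ⊗ c ⊗ 1) ∘ (1 ⊗ 1 ⊗ b⁰)`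
      ((α_ (A ⊗ A) A (M.V ⊗ N.V)).inv ≫ ((α_ A A A).hom ▷ (M.V ⊗ N.V)) ≫
          (dTwo S.m S.t₂ ▷ (M.V ⊗ N.V)) ≫ actPair M.act N.act
        = ((A ⊗ A) ◁ b0) ≫ actPair M.act N.act) :=
  lemma_action_b0_general presL presR regcomp S hmreg hn₁ hμ hε hτ hτbar M N hτbM hτN

end WeakMultiplierBimonoid
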